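/- Let (L₀, L₂) and (L₀′, L₂′) be pairs of τ-stable lattices with L₀ = L₀^⊥, L₀′ = (L₀′)^⊥, L₂ = pL₂^⊥, L₂′ = p(L₂′)^⊥, L₂ ⊆ L₀, L₂′ ⊆ L₀′, and (L₀, L₂) ≠ (L₀′, L₂′). If M ∈ ℳ(𝔽) satisfies L₂ ⊆ M ⊆ L₀ and L₂′ ⊆ M ⊆ L₀′, then M is τ-stable (hence superspecial); moreover if L₀ ≠ L₀′ then M = L₀ ∩ L₀′, and if L₂ ≠ L₂′ then M = L₂ + L₂′. -/

import Mathlib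

open Pointwise

noncomputable section

variable (p : ℕ) [Fact p.Prime] (𝔽 : Type) [Field 𝔽] [IsAlgClosed 𝔽] [CharP 𝔽 p]

/-- The Witt ring `W(𝔽)`. -/
abbrev Wp := WittVector p 𝔽

/-- The fraction field `K` of `W(𝔽)`. -/
abbrev Kp := FractionRing (Wp p 𝔽)

/-- `N = K⁴`. -/
abbrev Nn := Fin 4 → Kp p 𝔽

variable (σ : Kp p 𝔽 ≃+* Kp p 𝔽)
variable (B : LinearMap.BilinForm (Kp p 𝔽) (Nn p 𝔽))
variable (F : Nn p 𝔽 → Nn p 𝔽)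

/-- `σ` is the automorphism of `K` induced by the Witt-vector Frobenius. -/
def IsWittFrobenius : Prop :=
  ∀ w : Wp p 𝔽, σ (algebraMap (Wp p 𝔽) (Kp p 𝔽) w)
    = algebraMap (Wp p 𝔽) (Kp p 𝔽) (WittVector.frobeniusEquiv p 𝔽 w)

/-- `F` is a `σ`-semilinear bijection of `N` with `⟨Fx, Fy⟩ = p·σ(⟨x, y⟩)`. -/
def IsFrobeniusMap : Prop :=
  Function.Bijective F ∧ (∀ x y, F (x + y) = F x + F y) ∧
  (∀ (c : Kp p 𝔽) (x : Nn p 𝔽), F (c • x) = σ c • F x) ∧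
  (∀ x y, B (F x) (F y) = (p : Kp p 𝔽) * σ (B x y))

/-- The Verschiebung `V = p·F⁻¹`. -/
def Vmap : Nn p 𝔽 → Nn p 𝔽 := fun x => (p : Kp p 𝔽) • Function.invFun F x

/-- `τ = V⁻¹F = p⁻¹F²`. -/
def tauMap : Nn p 𝔽 → Nn p 𝔽 := fun x => ((p : Kp p 𝔽))⁻¹ • F (F x)

/-- The `W`-lattice `FM` generated by the image of `M` under `F`. -/
def FL (M : Submodule (Wp p 𝔽) (Nn p 𝔽)) : Submodule (Wp p 𝔽) (Nn p 𝔽) :=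
  Submodule.span (Wp p 𝔽) (F '' M)

/-- The `W`-lattice `VM` generated by the image of `M` under `V`. -/
def VL (M : Submodule (Wp p 𝔽) (Nn p 𝔽)) : Submodule (Wp p 𝔽) (Nn p 𝔽) :=
  Submodule.span (Wp p 𝔽) (Vmap p 𝔽 F '' M)

/-- The `W`-lattice `τM` generated by the image of `M` under `τ`. -/
def tauL (M : Submodule (Wp p 𝔽) (Nn p 𝔽)) : Submodule (Wp p 𝔽) (Nn p 𝔽) :=
  Submodule.span (Wp p 𝔽) (tauMap p 𝔽 F '' M)

/-- The dual lattice `M^⊥` with respect to the form `B`. -/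
def dualB (M : Submodule (Wp p 𝔽) (Nn p 𝔽)) : Submodule (Wp p 𝔽) (Nn p 𝔽) where
  carrier := {x | ∀ m ∈ M, B x m ∈ (algebraMap (Wp p 𝔽) (Kp p 𝔽)).range}
  zero_mem' := by
    intro m hm
    rw [map_zero, LinearMap.zero_apply]
    exact zero_mem _
  add_mem' := by
    intro x y hx hy m hm
    rw [map_add, LinearMap.add_apply]
    exact add_mem (hx m hm) (hy m hm)
  smul_mem' := by
    intro c x hx m hm
    rw [← algebraMap_smul (Kp p 𝔽) c x, map_smul, LinearMap.smul_apply, smul_eq_mul]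
    exact mul_mem ⟨c, rfl⟩ (hx m hm)

/-- `M` is a lattice in `N`: finitely generated over `W` and spanning `N` over `K`. -/
def IsLattice (M : Submodule (Wp p 𝔽) (Nn p 𝔽)) : Prop :=
  M.FG ∧ Submodule.span (Kp p 𝔽) (M : Set (Nn p 𝔽)) = ⊤

/-- The length of the `W`-module `B / A` (as the Krull dimension of its submodule
lattice). -/
def relLength (A B : Submodule (Wp p 𝔽) (Nn p 𝔽)) : WithBot ℕ∞ :=
  Order.krullDim (Submodule (Wp p 𝔽) (B ⧸ (A.comap B.subtype)))

/-- `A ⊂ᵈ B` : `A ⊆ B` with colength `d`. -/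
def SubD (d : ℕ) (A B : Submodule (Wp p 𝔽) (Nn p 𝔽)) : Prop :=
  A ≤ B ∧ relLength p 𝔽 A B = (d : WithBot ℕ∞)

/-- `a(M) = dim_𝔽 M/(FM + VM)`, as the `W`-length of `M/(FM + VM)`
(the quotient is killed by `p`, so its `W`-length equals its `𝔽`-dimension). -/
def aNum (M : Submodule (Wp p 𝔽) (Nn p 𝔽)) : WithBot ℕ∞ :=
  relLength p 𝔽 (FL p 𝔽 F M ⊔ VL p 𝔽 F M) M

/-- Membership in `ℳ(𝔽)`: `M` is a lattice with `pM ⊂² VM ⊂² M` and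
`pM^⊥ ⊂² M ⊂² M^⊥`. -/
def memM (M : Submodule (Wp p 𝔽) (Nn p 𝔽)) : Prop :=
  IsLattice p 𝔽 M ∧
  SubD p 𝔽 2 ((p : Wp p 𝔽) • M) (VL p 𝔽 F M) ∧
  SubD p 𝔽 2 (VL p 𝔽 F M) M ∧
  SubD p 𝔽 2 ((p : Wp p 𝔽) • dualB p 𝔽 B M) M ∧
  SubD p 𝔽 2 M (dualB p 𝔽 B M)

theorem relLen_mono_aux (p : ℕ) [Fact p.Prime] (𝔽 : Type) [Field 𝔽] [IsAlgClosed 𝔽] [CharP 𝔽 p]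
    {A C X Y : Submodule (Wp p 𝔽) (Nn p 𝔽)} (hA : A ≤ X) (hXY : X < Y) (hC : Y ≤ C) :
    (X.comap C.subtype).map (A.comap C.subtype).mkQ
      < (Y.comap C.subtype).map (A.comap C.subtype).mkQ := by
  refine lt_of_le_of_ne (Submodule.map_mono (Submodule.comap_mono hXY.le)) ?_
  intro h
  have h1 := congrArg (Submodule.comap (A.comap C.subtype).mkQ) h
  rw [Submodule.comap_map_mkQ, Submodule.comap_map_mkQ,
    sup_eq_right.2 (Submodule.comap_mono hA),
    sup_eq_right.2 (Submodule.comap_mono (hA.trans hXY.le))] at h1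
  have h2 := congrArg (Submodule.map C.subtype) h1
  rw [Submodule.map_comap_subtype, Submodule.map_comap_subtype,
    inf_eq_right.2 (hXY.le.trans hC), inf_eq_right.2 hC] at h2
  exact hXY.ne h2

theorem no_chain_aux (p : ℕ) [Fact p.Prime] (𝔽 : Type) [Field 𝔽] [IsAlgClosed 𝔽] [CharP 𝔽 p]
    {A C X Y : Submodule (Wp p 𝔽) (Nn p 𝔽)} (h : SubD p 𝔽 2 A C)
    (hA : A < X) (hXY : X < Y) (hC : Y < C) : False := by
  have a1 := relLen_mono_aux p 𝔽 le_rfl hA (hXY.trans hC).le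
  have a2 := relLen_mono_aux p 𝔽 hA.le hXY hC.le
  have a3 := relLen_mono_aux p 𝔽 (hA.trans hXY).le hC le_rfl
  let s : LTSeries (Submodule (Wp p 𝔽) (C ⧸ (A.comap C.subtype))) :=
    (((RelSeries.singleton _ _).snoc _ a1).snoc _ (by simpa using a2)).snoc _ (by simpa using a3)
  have hs := Order.LTSeries.length_le_krullDim s
  have h3 : s.length = 3 := by simp [s]
  have h2 := h.2
  unfold relLength at h2
  rw [h2, h3] at hs
  have : (3 : ℕ) ≤ 2 := by exact_mod_cast hs
  omega

theorem tau_mem_aux (p : ℕ) [Fact p.Prime] (𝔽 : Type) [Field 𝔽] [IsAlgClosed 𝔽] [CharP 𝔽 p]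
    (σ : Kp p 𝔽 ≃+* Kp p 𝔽) (hσ : IsWittFrobenius p 𝔽 σ)
    (G : Nn p 𝔽 → Nn p 𝔽) (hadd : ∀ x y, G (x + y) = G x + G y)
    (hsm : ∀ (c : Kp p 𝔽) (x : Nn p 𝔽), G (c • x) = σ c • G x)
    (M : Submodule (Wp p 𝔽) (Nn p 𝔽)) (x : Nn p 𝔽) :
    x ∈ Submodule.span (Wp p 𝔽) (G '' M) ↔ ∃ m ∈ M, G m = x := by
  constructor
  · intro hx
    induction hx using Submodule.span_induction with
    | mem x hx => exact hx
    | zero => exact ⟨0, zero_mem _, by simpa using hsm 0 0⟩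
    | add x y _ _ hx hy =>
      obtain ⟨a, ha, rfl⟩ := hx
      obtain ⟨b, hb, rfl⟩ := hy
      exact ⟨a + b, add_mem ha hb, hadd _ _⟩
    | smul c x _ hx =>
      obtain ⟨a, ha, rfl⟩ := hx
      refine ⟨(WittVector.frobeniusEquiv p 𝔽).symm c • a, M.smul_mem _ ha, ?_⟩
      rw [← algebraMap_smul (Kp p 𝔽), hsm, hσ, RingEquiv.apply_symm_apply, algebraMap_smul]
  · rintro ⟨m, hm, rfl⟩
    exact Submodule.subset_span ⟨m, hm, rfl⟩

theorem dual_anti_aux (p : ℕ) [Fact p.Prime] (𝔽 : Type) [Field 𝔽] [IsAlgClosed 𝔽] [CharP 𝔽 p]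
    (B : LinearMap.BilinForm (Kp p 𝔽) (Nn p 𝔽))
    {X Y : Submodule (Wp p 𝔽) (Nn p 𝔽)} (h : X ≤ Y) : dualB p 𝔽 B Y ≤ dualB p 𝔽 B X :=
  fun _ hx m hm => hx m (h hm)

/-- Let `(L₀, L₂)` and `(L₀′, L₂′)` be pairs of `τ`-stable
lattices with `L₀ = L₀^⊥`, `L₀′ = (L₀′)^⊥`, `L₂ = pL₂^⊥`, `L₂′ = p(L₂′)^⊥`,
`L₂ ⊆ L₀`, `L₂′ ⊆ L₀′`, and `(L₀, L₂) ≠ (L₀′, L₂′)`. If `M ∈ ℳ(𝔽)` satisfies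
`L₂ ⊆ M ⊆ L₀` and `L₂′ ⊆ M ⊆ L₀′`, then `M` is `τ`-stable (hence superspecial);
moreover if `L₀ ≠ L₀′` then `M = L₀ ∩ L₀′`, and if `L₂ ≠ L₂′` then
`M = L₂ + L₂′`. -/
theorem intersection_of_paramodular_strata
    (p : ℕ) [Fact p.Prime] (hp : Odd p)
    (𝔽 : Type) [Field 𝔽] [IsAlgClosed 𝔽] [CharP 𝔽 p]
    (σ : Kp p 𝔽 ≃+* Kp p 𝔽) (hσ : IsWittFrobenius p 𝔽 σ)
    (B : LinearMap.BilinForm (Kp p 𝔽) (Nn p 𝔽)) (halt : B.IsAlt)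
    (hnd : B.Nondegenerate)
    (F : Nn p 𝔽 → Nn p 𝔽) (hF : IsFrobeniusMap p 𝔽 σ B F)
    (L₀ L₂ L₀' L₂' : Submodule (Wp p 𝔽) (Nn p 𝔽))
    (h0 : IsLattice p 𝔽 L₀) (hτ0 : tauL p 𝔽 F L₀ = L₀)
    (hd0 : L₀ = dualB p 𝔽 B L₀)
    (h0' : IsLattice p 𝔽 L₀') (hτ0' : tauL p 𝔽 F L₀' = L₀')
    (hd0' : L₀' = dualB p 𝔽 B L₀')
    (h2 : IsLattice p 𝔽 L₂) (hτ2 : tauL p 𝔽 F L₂ = L₂)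
    (hd2 : L₂ = (p : Wp p 𝔽) • dualB p 𝔽 B L₂)
    (h2' : IsLattice p 𝔽 L₂') (hτ2' : tauL p 𝔽 F L₂' = L₂')
    (hd2' : L₂' = (p : Wp p 𝔽) • dualB p 𝔽 B L₂')
    (h20 : L₂ ≤ L₀) (h20' : L₂' ≤ L₀')
    (hne : (L₀, L₂) ≠ (L₀', L₂'))
    (M : Submodule (Wp p 𝔽) (Nn p 𝔽)) (hM : memM p 𝔽 B F M)
    (hM2 : L₂ ≤ M) (hM0 : M ≤ L₀) (hM2' : L₂' ≤ M) (hM0' : M ≤ L₀') :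
    tauL p 𝔽 F M = M ∧
    FL p 𝔽 F (FL p 𝔽 F M) = (p : Wp p 𝔽) • M ∧
    (L₀ ≠ L₀' → M = L₀ ⊓ L₀') ∧
    (L₂ ≠ L₂' → M = L₂ ⊔ L₂') := by
  obtain ⟨hbij, hadd, hsm, -⟩ := hF
  obtain ⟨-, -, -, hMd, hMu⟩ := hM
  have hp0 : (p : Kp p 𝔽) ≠ 0 := by
    have h : (p : Wp p 𝔽) ≠ 0 := WittVector.p_nonzero p 𝔽
    have h' := (map_ne_zero_iff (algebraMap (Wp p 𝔽) (Kp p 𝔽))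
      (IsFractionRing.injective (Wp p 𝔽) (Kp p 𝔽))).2 h
    simpa using h'
  have hFmem := tau_mem_aux p 𝔽 σ hσ F hadd hsm
  -- elements of `τ M`
  have hτmem : ∀ (A : Submodule (Wp p 𝔽) (Nn p 𝔽)) (x : Nn p 𝔽),
      x ∈ tauL p 𝔽 F A ↔ ∃ m ∈ A, tauMap p 𝔽 F m = x := by
    have key : ∀ (A : Submodule (Wp p 𝔽) (Nn p 𝔽)) (x : Nn p 𝔽),
        x ∈ Submodule.span (Wp p 𝔽) (tauMap p 𝔽 F '' A) → ∃ m ∈ A, tauMap p 𝔽 F m = x := by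
      intro A x hx
      induction hx using Submodule.span_induction with
      | mem x hx => exact hx
      | zero =>
        refine ⟨0, zero_mem _, ?_⟩
        have : F 0 = 0 := by simpa using hsm 0 0
        simp [tauMap, this]
      | add x y _ _ hx hy =>
        obtain ⟨a, ha, rfl⟩ := hx
        obtain ⟨b, hb, rfl⟩ := hy
        exact ⟨a + b, add_mem ha hb, by simp only [tauMap, hadd, smul_add]⟩
      | smul c x _ hx =>
        obtain ⟨a, ha, rfl⟩ := hx
        refine ⟨(WittVector.frobeniusEquiv p 𝔽).symm ((WittVector.frobeniusEquiv p 𝔽).symm c) • a,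
          A.smul_mem _ ha, ?_⟩
        simp only [tauMap]
        rw [← algebraMap_smul (Kp p 𝔽)
          ((WittVector.frobeniusEquiv p 𝔽).symm ((WittVector.frobeniusEquiv p 𝔽).symm c)) a,
          hsm, hσ, RingEquiv.apply_symm_apply, hsm, hσ,
          RingEquiv.apply_symm_apply, smul_comm, algebraMap_smul]
    intro A x
    refine ⟨key A x, ?_⟩
    rintro ⟨m, hm, rfl⟩
    exact Submodule.subset_span ⟨m, hm, rfl⟩
  have hτinj : Function.Injective (tauMap p 𝔽 F) := by
    intro x y hxy
    exact hbij.1 (hbij.1 (smul_right_injective _ (inv_ne_zero hp0) hxy))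
  have hτadd : ∀ x y, tauMap p 𝔽 F (x + y) = tauMap p 𝔽 F x + tauMap p 𝔽 F y := by
    intro x y
    simp only [tauMap, hadd, smul_add]
  have c0 : L₀ ≠ L₀' → M = L₀ ⊓ L₀' := by
    intro hn
    by_contra hMne
    have hlt : M < L₀ ⊓ L₀' := lt_of_le_of_ne (le_inf hM0 hM0') hMne
    have l1 : L₀ ⊓ L₀' < L₀ := by
      refine lt_of_le_of_ne inf_le_left fun h => hn ?_
      have h1 : L₀ ≤ L₀' := inf_eq_left.1 h
      refine le_antisymm h1 ?_
      rw [hd0, hd0']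
      exact dual_anti_aux p 𝔽 B h1
    have l2 : L₀ ⊓ L₀' < L₀' := by
      refine lt_of_le_of_ne inf_le_right fun h => hn ?_
      have h1 : L₀' ≤ L₀ := inf_eq_right.1 h
      refine le_antisymm ?_ h1
      rw [hd0, hd0']
      exact dual_anti_aux p 𝔽 B h1
    have u1 : L₀ ≤ dualB p 𝔽 B M := hd0.le.trans (dual_anti_aux p 𝔽 B hM0)
    have u2 : L₀' ≤ dualB p 𝔽 B M := hd0'.le.trans (dual_anti_aux p 𝔽 B hM0')
    rcases u1.lt_or_eq with h | e1
    · exact no_chain_aux p 𝔽 hMu hlt l1 h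
    rcases u2.lt_or_eq with h | e2
    · exact no_chain_aux p 𝔽 hMu hlt l2 h
    exact hn (e1.trans e2.symm)
  have smono : ∀ {X Y : Submodule (Wp p 𝔽) (Nn p 𝔽)}, X ≤ Y →
      (p : Wp p 𝔽) • dualB p 𝔽 B Y ≤ (p : Wp p 𝔽) • dualB p 𝔽 B X := fun h =>
    Submodule.map_mono (dual_anti_aux p 𝔽 B h)
  have c2 : L₂ ≠ L₂' → M = L₂ ⊔ L₂' := by
    intro hn
    by_contra hMne
    have hlt : L₂ ⊔ L₂' < M := lt_of_le_of_ne (sup_le hM2 hM2') (Ne.symm hMne)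
    have l1 : L₂ < L₂ ⊔ L₂' := by
      refine lt_of_le_of_ne le_sup_left fun h => hn ?_
      have h1 : L₂' ≤ L₂ := left_eq_sup.1 h
      refine le_antisymm ?_ h1
      rw [hd2, hd2']
      exact smono h1
    have l2 : L₂' < L₂ ⊔ L₂' := by
      refine lt_of_le_of_ne le_sup_right fun h => hn ?_
      have h1 : L₂ ≤ L₂' := right_eq_sup.1 h
      refine le_antisymm h1 ?_
      rw [hd2, hd2']
      exact smono h1
    have u1 : (p : Wp p 𝔽) • dualB p 𝔽 B M ≤ L₂ := (smono hM2).trans hd2.ge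
    have u2 : (p : Wp p 𝔽) • dualB p 𝔽 B M ≤ L₂' := (smono hM2').trans hd2'.ge
    rcases u1.lt_or_eq with h | e1
    · exact no_chain_aux p 𝔽 hMd h l1 hlt
    rcases u2.lt_or_eq with h | e2
    · exact no_chain_aux p 𝔽 hMd h l2 hlt
    exact hn (e1.symm.trans e2)
  have hτM : tauL p 𝔽 F M = M := by
    by_cases hL : L₀ = L₀'
    · have hL2 : L₂ ≠ L₂' := fun h => hne (by rw [hL, h])
      have e := c2 hL2
      apply le_antisymm
      · intro x hx
        obtain ⟨m, hm, rfl⟩ := (hτmem _ _).1 hx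
        rw [e] at hm ⊢
        obtain ⟨a, ha, b, hb, rfl⟩ := Submodule.mem_sup.1 hm
        rw [hτadd]
        refine Submodule.add_mem_sup ?_ ?_
        · exact hτ2.le ((hτmem _ _).2 ⟨a, ha, rfl⟩)
        · exact hτ2'.le ((hτmem _ _).2 ⟨b, hb, rfl⟩)
      · intro x hx
        rw [e] at hx
        obtain ⟨a, ha, b, hb, rfl⟩ := Submodule.mem_sup.1 hx
        obtain ⟨a', ha', rfl⟩ := (hτmem _ _).1 (hτ2.ge ha)
        obtain ⟨b', hb', rfl⟩ := (hτmem _ _).1 (hτ2'.ge hb)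
        exact (hτmem _ _).2 ⟨a' + b', add_mem (hM2 ha') (hM2' hb'), hτadd _ _⟩
    · have e := c0 hL
      apply le_antisymm
      · intro x hx
        obtain ⟨m, hm, rfl⟩ := (hτmem _ _).1 hx
        rw [e]
        exact ⟨hτ0.le ((hτmem _ _).2 ⟨m, hM0 hm, rfl⟩),
          hτ0'.le ((hτmem _ _).2 ⟨m, hM0' hm, rfl⟩)⟩
      · intro x hx
        obtain ⟨a, ha, rfl⟩ := (hτmem _ _).1 (hτ0.ge (hM0 hx))
        obtain ⟨b, hb, hab⟩ := (hτmem _ _).1 (hτ0'.ge (hM0' hx))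
        obtain rfl := hτinj hab
        refine (hτmem _ _).2 ⟨b, ?_, rfl⟩
        rw [e]
        exact ⟨ha, hb⟩
  refine ⟨hτM, ?_, c0, c2⟩
  have hpsm : ∀ y : Nn p 𝔽, (p : Wp p 𝔽) • y = (p : Kp p 𝔽) • y := by
    intro y
    rw [← algebraMap_smul (Kp p 𝔽), map_natCast]
  have hFF : ∀ y : Nn p 𝔽, (p : Wp p 𝔽) • tauMap p 𝔽 F y = F (F y) := by
    intro y
    rw [hpsm, tauMap, smul_smul, mul_inv_cancel₀ hp0, one_smul]
  ext x
  constructor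
  · intro hx
    obtain ⟨y, hy, rfl⟩ := (hFmem _ _).1 hx
    obtain ⟨m, hm, rfl⟩ := (hFmem _ _).1 hy
    rw [← hFF]
    exact Submodule.smul_mem_pointwise_smul _ _ _ (hτM.le ((hτmem _ _).2 ⟨m, hm, rfl⟩))
  · intro hx
    obtain ⟨y, hy, rfl⟩ := (Submodule.mem_smul_pointwise_iff_exists _ _ _).1 hx
    obtain ⟨m, hm, rfl⟩ := (hτmem _ _).1 (hτM.ge hy)
    rw [hFF]
    exact (hFmem _ _).2 ⟨F m, (hFmem _ _).2 ⟨m, hm, rfl⟩, rfl⟩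


end
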